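/- Let d, p ∈ ℕ, q ≥ 1, Ξ := {u ∈ [0,∞)^d : ‖u‖_q = 1}, and for b ∈ Ξ^p and u ∈ [0,∞)^d let f_b(u) := inf_{c ∈ [0,∞)^p} Σ_{i=1}^d |u_i − max_{1≤k≤p} c_k·b_{ik}|. Let S_n (n ∈ ℕ) and S be finite Borel measures on Ξ with S_n → S weakly, and for each n let b_n ∈ Ξ^p be a minimizer of b ↦ ∫_Ξ f_b(u) S_n(du) over Ξ^p. If a subsequence (b_{n_i}) converges to b_∞ ∈ Ξ^p, then b_∞ is a minimizer of b ↦ ∫_Ξ f_b(u) S(du) over Ξ^p; moreover ∫_Ξ f_{b_{n_i}}(u) S_{n_i}(du) → ∫_Ξ f_{b_∞}(u) S(du). -/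

import Mathlib

open MeasureTheory Filter Topology
open scoped NNReal

section MaxTimes

variable {ι κ : Type*} [Fintype ι]

/-- The `ℓ¹`-distance from `u` to the max-times combination of the `b k` with coefficients `c`. -/
noncomputable def maxTimesError (b : κ → ι → ℝ) (u : ι → ℝ) (c : κ → ℝ≥0) : ℝ :=
  ∑ i, |u i - ⨆ k, (c k : ℝ) * b k i|

/-- The `ℓ¹`-distance from `u` to the max-times span of the `b k`. -/
noncomputable def maxTimesDist (b : κ → ι → ℝ) (u : ι → ℝ) : ℝ :=
  ⨅ c : κ → ℝ≥0, maxTimesError b u c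

theorem maxTimesError_nonneg (b : κ → ι → ℝ) (u : ι → ℝ) (c : κ → ℝ≥0) :
    0 ≤ maxTimesError b u c :=
  Finset.sum_nonneg fun _ _ => abs_nonneg _

theorem maxTimesDist_nonneg (b : κ → ι → ℝ) (u : ι → ℝ) : 0 ≤ maxTimesDist b u :=
  Real.iInf_nonneg (maxTimesError_nonneg b u)

theorem maxTimesDist_le_error (b : κ → ι → ℝ) (u : ι → ℝ) (c : κ → ℝ≥0) :
    maxTimesDist b u ≤ maxTimesError b u c :=
  ciInf_le ⟨0, Set.forall_mem_range.2 (maxTimesError_nonneg b u)⟩ c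

theorem maxTimesDist_le_sum_abs (b : κ → ι → ℝ) (u : ι → ℝ) :
    maxTimesDist b u ≤ ∑ i, |u i| := by
  simpa [maxTimesError] using maxTimesDist_le_error b u 0

theorem lipschitzWith_maxTimesDist (b : κ → ι → ℝ) :
    LipschitzWith (Fintype.card ι) (maxTimesDist b) := by
  refine LipschitzWith.of_le_add_mul _ fun u v => ?_
  rw [← sub_le_iff_le_add]
  refine le_ciInf fun c => ?_
  rw [sub_le_iff_le_add]
  refine (maxTimesDist_le_error b u c).trans ?_
  have hsum : ((Fintype.card ι : ℝ≥0) : ℝ) * dist u v = ∑ _i : ι, dist u v := by simp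
  rw [hsum, maxTimesError, maxTimesError, ← Finset.sum_add_distrib]
  refine Finset.sum_le_sum fun i _ => ?_
  have h := abs_sub_le (u i) (v i) (⨆ k, (c k : ℝ) * b k i)
  have h' : |u i - v i| ≤ dist u v := dist_le_pi_dist u v i
  linarith

/-- The max-times distance truncated at level `r`, as a bounded continuous function. -/
noncomputable def truncatedMaxTimesDist (b : κ → ι → ℝ) (r : ℝ) :
    BoundedContinuousFunction (ι → ℝ) ℝ :=
  BoundedContinuousFunction.ofNormedAddCommGroup (fun u => min (maxTimesDist b u) |r|)
    ((lipschitzWith_maxTimesDist b).continuous.min continuous_const) |r| fun u => by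
      rw [Real.norm_eq_abs, abs_of_nonneg (le_min (maxTimesDist_nonneg b u) (abs_nonneg r))]
      exact min_le_right _ _

theorem truncatedMaxTimesDist_eq (b : κ → ι → ℝ) {u : ι → ℝ} {r : ℝ} (hu : ∑ i, |u i| ≤ r) :
    truncatedMaxTimesDist b r u = maxTimesDist b u :=
  min_eq_left ((maxTimesDist_le_sum_abs b u).trans (hu.trans (le_abs_self r)))

theorem setIntegral_maxTimesDist_eq (b : κ → ι → ℝ) {Ξ : Set (ι → ℝ)} {r : ℝ}
    (hΞ : ∀ u ∈ Ξ, ∑ i, |u i| ≤ r) {μ : Measure (ι → ℝ)} (hμ : μ Ξᶜ = 0) :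
    ∫ u in Ξ, maxTimesDist b u ∂μ = ∫ u, truncatedMaxTimesDist b r u ∂μ := by
  have hmem : ∀ᵐ u ∂μ, u ∈ Ξ := mem_ae_iff.2 hμ
  rw [Measure.restrict_eq_self_of_ae_mem hmem]
  exact integral_congr_ae (hmem.mono fun u hu => (truncatedMaxTimesDist_eq b (hΞ u hu)).symm)

variable [Fintype κ]

theorem coeff_le_of_maxTimesError_le {b : κ → ι → ℝ} (hb : ∀ k, 1 ≤ ∑ i, b k i)
    {u : ι → ℝ} {c : κ → ℝ≥0} {r : ℝ} (hu : ∑ i, |u i| ≤ r) (hc : maxTimesError b u c ≤ r)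
    (k : κ) : (c k : ℝ) ≤ 2 * r :=
  calc (c k : ℝ) ≤ c k * ∑ i, b k i := le_mul_of_one_le_right (c k).2 (hb k)
    _ = ∑ i, c k * b k i := Finset.mul_sum _ _ _
    _ ≤ ∑ i, (|u i| + |u i - ⨆ k, (c k : ℝ) * b k i|) := by
      refine Finset.sum_le_sum fun i _ => ?_
      have h : (c k : ℝ) * b k i ≤ ⨆ k, (c k : ℝ) * b k i :=
        le_ciSup (f := fun k => (c k : ℝ) * b k i) (Set.finite_range _).bddAbove k
      linarith [neg_abs_le (u i - ⨆ k, (c k : ℝ) * b k i), le_abs_self (u i)]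
    _ = ∑ i, |u i| + maxTimesError b u c := Finset.sum_add_distrib
    _ ≤ 2 * r := by linarith

theorem iSup_mul_le_iSup_mul_add [Nonempty κ] (b b' : κ → ι → ℝ) {c : κ → ℝ≥0} {M : ℝ}
    (hc : ∀ k, (c k : ℝ) ≤ M) (i : ι) :
    ⨆ k, (c k : ℝ) * b k i ≤ (⨆ k, (c k : ℝ) * b' k i) + M * dist b b' := by
  refine ciSup_le fun k => ?_
  have h : (c k : ℝ) * b' k i ≤ ⨆ k, (c k : ℝ) * b' k i :=
    le_ciSup (f := fun k => (c k : ℝ) * b' k i) (Set.finite_range _).bddAbove k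
  have hdist : b k i - b' k i ≤ dist b b' :=
    (le_abs_self _).trans ((dist_le_pi_dist (b k) (b' k) i).trans (dist_le_pi_dist b b' k))
  have h₁ := mul_le_mul_of_nonneg_left hdist (c k).2
  have h₂ := mul_le_mul_of_nonneg_right (hc k) (dist_nonneg (x := b) (y := b'))
  simp only [NNReal.val_eq_coe] at h₁
  linarith

theorem maxTimesDist_le_add_dist [Nonempty κ] {b : κ → ι → ℝ} (hb : ∀ k, 1 ≤ ∑ i, b k i)
    (b' : κ → ι → ℝ) {u : ι → ℝ} {r : ℝ} (hu : ∑ i, |u i| ≤ r) :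
    maxTimesDist b' u ≤ maxTimesDist b u + Fintype.card ι * (2 * r * dist b b') := by
  have hr : 0 ≤ r := (Finset.sum_nonneg fun _ _ => abs_nonneg _).trans hu
  rw [← sub_le_iff_le_add]
  refine le_ciInf fun c => ?_
  rw [sub_le_iff_le_add]
  rcases le_total (maxTimesError b u c) r with hc | hc
  · have hM := coeff_le_of_maxTimesError_le hb hu hc
    refine (maxTimesDist_le_error b' u c).trans ?_
    have hsum : (Fintype.card ι : ℝ) * (2 * r * dist b b') = ∑ _i : ι, 2 * r * dist b b' := by
      simp
    rw [hsum, maxTimesError, maxTimesError, ← Finset.sum_add_distrib]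
    refine Finset.sum_le_sum fun i _ => ?_
    have h₁ := iSup_mul_le_iSup_mul_add b b' hM i
    have h₂ := iSup_mul_le_iSup_mul_add b' b hM i
    rw [dist_comm b' b] at h₂
    have h₃ := abs_sub_le (u i) (⨆ k, (c k : ℝ) * b k i) (⨆ k, (c k : ℝ) * b' k i)
    have h₄ : |(⨆ k, (c k : ℝ) * b k i) - ⨆ k, (c k : ℝ) * b' k i| ≤ 2 * r * dist b b' :=
      abs_sub_le_iff.2 ⟨by linarith, by linarith⟩
    linarith
  · have h : 0 ≤ (Fintype.card ι : ℝ) * (2 * r * dist b b') := by positivity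
    linarith [maxTimesDist_le_sum_abs b' u]

theorem abs_maxTimesDist_sub_le [Nonempty κ] {b b' : κ → ι → ℝ} (hb : ∀ k, 1 ≤ ∑ i, b k i)
    (hb' : ∀ k, 1 ≤ ∑ i, b' k i) {u : ι → ℝ} {r : ℝ} (hu : ∑ i, |u i| ≤ r) :
    |maxTimesDist b u - maxTimesDist b' u| ≤ Fintype.card ι * (2 * r * dist b b') := by
  have h₁ := maxTimesDist_le_add_dist hb b' hu
  have h₂ := maxTimesDist_le_add_dist hb' b hu
  rw [dist_comm b' b] at h₂
  exact abs_sub_le_iff.2 ⟨by linarith, by linarith⟩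

/-- Joint continuity of the integrated max-times distance in the frame and the measure. -/
theorem tendsto_integral_truncatedMaxTimesDist [Nonempty κ] {α : Type*} {l : Filter α}
    {Ξ : Set (ι → ℝ)} {r : ℝ} (hΞ : ∀ u ∈ Ξ, ∑ i, |u i| ≤ r)
    {μ : α → FiniteMeasure (ι → ℝ)} {ν : FiniteMeasure (ι → ℝ)}
    (hμ : ∀ a, (μ a : Measure (ι → ℝ)) Ξᶜ = 0) (hlim : Tendsto μ l (𝓝 ν))
    {b : α → κ → ι → ℝ} {b₀ : κ → ι → ℝ} (hb : ∀ a k, 1 ≤ ∑ i, b a k i)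
    (hb₀ : ∀ k, 1 ≤ ∑ i, b₀ k i) (hblim : Tendsto b l (𝓝 b₀)) :
    Tendsto (fun a => ∫ u, truncatedMaxTimesDist (b a) r u ∂(μ a : Measure (ι → ℝ))) l
      (𝓝 (∫ u, truncatedMaxTimesDist b₀ r u ∂(ν : Measure (ι → ℝ)))) := by
  have hfix := FiniteMeasure.tendsto_iff_forall_integral_tendsto.1 hlim
    (truncatedMaxTimesDist b₀ r)
  have hmass : Tendsto (fun a => ((μ a).mass : ℝ)) l (𝓝 (ν.mass : ℝ)) :=
    (NNReal.continuous_coe.tendsto _).comp hlim.mass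
  have hbound : Tendsto
      (fun a => Fintype.card ι * (2 * r * dist (b a) b₀) * ((μ a).mass : ℝ)) l (𝓝 0) := by
    have h := (((tendsto_iff_dist_tendsto_zero.1 hblim).const_mul (2 * r)).const_mul
      (Fintype.card ι : ℝ)).mul hmass
    simpa using h
  have hdiff : Tendsto (fun a => ∫ u, truncatedMaxTimesDist (b a) r u ∂(μ a : Measure (ι → ℝ))
      - ∫ u, truncatedMaxTimesDist b₀ r u ∂(μ a : Measure (ι → ℝ))) l (𝓝 0) := by
    refine squeeze_zero_norm (fun a => ?_) hbound
    rw [← integral_sub (BoundedContinuousFunction.integrable _ _)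
      (BoundedContinuousFunction.integrable _ _)]
    refine norm_integral_le_of_norm_le_const ?_
    have hmem : ∀ᵐ u ∂(μ a : Measure (ι → ℝ)), u ∈ Ξ := mem_ae_iff.2 (hμ a)
    filter_upwards [hmem] with u hu
    rw [truncatedMaxTimesDist_eq _ (hΞ u hu), truncatedMaxTimesDist_eq _ (hΞ u hu)]
    exact abs_maxTimesDist_sub_le (hb a) hb₀ (hΞ u hu)
  simpa using hdiff.add hfix

end MaxTimes

section Sphere

variable {ι : Type*} [Fintype ι] {u : ι → ℝ} {q : ℝ}

theorem sum_rpow_eq_one_of_rpow_inv_eq_one (hq : 0 < q) (hu : ∀ i, 0 ≤ u i)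
    (h : (∑ i, u i ^ q) ^ (1 / q) = 1) : ∑ i, u i ^ q = 1 := by
  have hs : 0 ≤ ∑ i, u i ^ q := Finset.sum_nonneg fun i _ => Real.rpow_nonneg (hu i) q
  have hpow := Real.rpow_inv_rpow hs hq.ne'
  rwa [← one_div, h, Real.one_rpow, eq_comm] at hpow

theorem le_one_of_sum_rpow_eq_one (hq : 0 < q) (hu : ∀ i, 0 ≤ u i)
    (h : ∑ i, u i ^ q = 1) (i : ι) : u i ≤ 1 := by
  have hi : u i ^ q ≤ 1 := h ▸ Finset.single_le_sum
    (f := fun i => u i ^ q) (fun j _ => Real.rpow_nonneg (hu j) q) (Finset.mem_univ i)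
  by_contra! hlt
  exact hi.not_gt (Real.one_lt_rpow hlt hq)

theorem sum_abs_le_card_of_sum_rpow_eq_one (hq : 0 < q) (hu : ∀ i, 0 ≤ u i)
    (h : ∑ i, u i ^ q = 1) : ∑ i, |u i| ≤ Fintype.card ι :=
  calc ∑ i, |u i| ≤ ∑ _i : ι, (1 : ℝ) := Finset.sum_le_sum fun i _ => by
        rw [abs_of_nonneg (hu i)]
        exact le_one_of_sum_rpow_eq_one hq hu h i
    _ = Fintype.card ι := by simp

theorem one_le_sum_of_sum_rpow_eq_one (hq : 1 ≤ q) (hu : ∀ i, 0 ≤ u i)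
    (h : ∑ i, u i ^ q = 1) : 1 ≤ ∑ i, u i := by
  rw [← h]
  refine Finset.sum_le_sum fun i _ => ?_
  exact Real.rpow_le_self_of_le_one (hu i)
    (le_one_of_sum_rpow_eq_one (zero_lt_one.trans_le hq) hu h i) hq

end Sphere

/-- Stability of the max-stable PCA under weak convergence of spectral measures:
if `Sₙ → S` weakly (all supported on the spectral sphere `Ξ`), `bₙ` minimizes
`b ↦ ∫_Ξ f_b dSₙ` over `B = Ξ^p`, and a subsequence `b_{n_i}` converges to `b_∞ ∈ B`,
then `b_∞` minimizes `b ↦ ∫_Ξ f_b dS` over `B` and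
`∫_Ξ f_{b_{n_i}} dS_{n_i} → ∫_Ξ f_{b_∞} dS`. -/
theorem stmt_17 (d p : ℕ) (hd : 0 < d) (hp : 0 < p) (q : ℝ) (hq : 1 ≤ q)
    (Ξ : Set (Fin d → ℝ))
    (hΞ : Ξ = {u | (∀ i, 0 ≤ u i) ∧ (∑ i, u i ^ q) ^ (1 / q) = 1})
    (f : (Fin p → Fin d → ℝ) → (Fin d → ℝ) → ℝ)
    (hf : ∀ b u, f b u = ⨅ c : Fin p → ℝ≥0, ∑ i, |u i - ⨆ k, (c k : ℝ) * b k i|)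
    (B : Set (Fin p → Fin d → ℝ)) (hB : B = {b | ∀ k, b k ∈ Ξ})
    (Sn : ℕ → FiniteMeasure (Fin d → ℝ)) (S : FiniteMeasure (Fin d → ℝ))
    (hsuppn : ∀ n, (Sn n : Measure (Fin d → ℝ)) Ξᶜ = 0)
    (hsupp : (S : Measure (Fin d → ℝ)) Ξᶜ = 0)
    (hweak : Tendsto Sn atTop (𝓝 S))
    (bn : ℕ → (Fin p → Fin d → ℝ)) (hbn : ∀ n, bn n ∈ B)
    (hmin : ∀ n, ∀ b ∈ B,
      ∫ u in Ξ, f (bn n) u ∂(Sn n : Measure (Fin d → ℝ))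
        ≤ ∫ u in Ξ, f b u ∂(Sn n : Measure (Fin d → ℝ)))
    (φ : ℕ → ℕ) (hφ : StrictMono φ)
    (binf : Fin p → Fin d → ℝ) (hbinf : binf ∈ B)
    (hconv : Tendsto (fun i => bn (φ i)) atTop (𝓝 binf)) :
    (∀ b ∈ B, ∫ u in Ξ, f binf u ∂(S : Measure (Fin d → ℝ))
        ≤ ∫ u in Ξ, f b u ∂(S : Measure (Fin d → ℝ))) ∧
    Tendsto (fun i => ∫ u in Ξ, f (bn (φ i)) u ∂(Sn (φ i) : Measure (Fin d → ℝ)))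
      atTop (𝓝 (∫ u in Ξ, f binf u ∂(S : Measure (Fin d → ℝ)))) := by
  have hq₀ : 0 < q := zero_lt_one.trans_le hq
  have : Nonempty (Fin p) := ⟨⟨0, hp⟩⟩
  obtain rfl : f = maxTimesDist := funext₂ hf
  have hsphere : ∀ u ∈ Ξ, (∀ i, 0 ≤ u i) ∧ ∑ i, u i ^ q = 1 := by
    rw [hΞ]
    exact fun u hu => ⟨hu.1, sum_rpow_eq_one_of_rpow_inv_eq_one hq₀ hu.1 hu.2⟩
  have hbdd : ∀ u ∈ Ξ, ∑ i, |u i| ≤ Fintype.card (Fin d) := fun u hu =>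
    sum_abs_le_card_of_sum_rpow_eq_one hq₀ (hsphere u hu).1 (hsphere u hu).2
  have hframe : ∀ b ∈ B, ∀ k, 1 ≤ ∑ i, b k i := by
    rw [hB]
    exact fun b hb k =>
      one_le_sum_of_sum_rpow_eq_one hq (hsphere _ (hb k)).1 (hsphere _ (hb k)).2
  have hlim : Tendsto (fun i => Sn (φ i)) atTop (𝓝 S) := hweak.comp hφ.tendsto_atTop
  have key : ∀ (b : ℕ → Fin p → Fin d → ℝ) (b₀ : Fin p → Fin d → ℝ), (∀ i, b i ∈ B) → b₀ ∈ B →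
      Tendsto b atTop (𝓝 b₀) →
      Tendsto (fun i => ∫ u in Ξ, maxTimesDist (b i) u ∂(Sn (φ i) : Measure (Fin d → ℝ)))
        atTop (𝓝 (∫ u in Ξ, maxTimesDist b₀ u ∂(S : Measure (Fin d → ℝ)))) := by
    intro b b₀ hb hb₀ hblim
    simp_rw [setIntegral_maxTimesDist_eq _ hbdd (hsuppn _),
      setIntegral_maxTimesDist_eq _ hbdd hsupp]
    exact tendsto_integral_truncatedMaxTimesDist hbdd (fun i => hsuppn (φ i)) hlim
      (fun i => hframe _ (hb i)) (hframe _ hb₀) hblim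
  have hvalue := key _ _ (fun i => hbn (φ i)) hbinf hconv
  exact ⟨fun b hb => le_of_tendsto_of_tendsto' hvalue
    (key (fun _ => b) b (fun _ => hb) hb tendsto_const_nhds) fun i => hmin (φ i) b hb, hvalue⟩
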